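/- Let d be an odd prime, r a primitive root modulo d, and define the matrices A₁, A₂, A₃, A₄, O, U as in the context. Let ψ̃ = (1/√(d−1)) Σ_{j=1}^{d−1} x_j ⊗ x_{d−j} ∈ ℂ^{d−1} ⊗ ℂ^{d−1}. Then (A_i ⊗ A_i) ψ̃ = ψ̃ for each i = 1, 2, 3, 4; consequently (O ⊗ O) ψ̃ = ψ̃ and (U ⊗ U) ψ̃ = ψ̃. -/

import Mathlib

open Matrix Kronecker

/-- The nonzero residues modulo `d`, indexing the rows/columns of our matrices. -/
abbrev NzRes (d : ℕ) := {x : ZMod d // x ≠ 0}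

/-- `ω = exp(2πi/d)`. -/
noncomputable def omC (d : ℕ) : ℂ := Complex.exp (2 * Real.pi * Complex.I / d)

/-- `η = exp(2πi/(d-1))`. -/
noncomputable def etC (d : ℕ) : ℂ := Complex.exp (2 * Real.pi * Complex.I / ((d : ℂ) - 1))

/-- The standard basis index `x_j` for `j : ℕ` (junk value if `j ≡ 0 mod d`). -/
noncomputable def xv (d : ℕ) [Fact (1 < d)] (j : ℕ) : NzRes d :=
  if h : (j : ZMod d) ≠ 0 then ⟨(j : ZMod d), h⟩ else ⟨1, one_ne_zero⟩

/-- The vector `u_k = (1/√(d-1)) ∑_{j=0}^{d-2} η^{jk} x_{r^j mod d}`. -/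
noncomputable def uvec (d r : ℕ) [Fact (1 < d)] (k : ℕ) : NzRes d → ℂ :=
  fun x => (Real.sqrt ((d : ℝ) - 1) : ℂ)⁻¹ *
    ∑ j ∈ Finset.range (d - 1), etC d ^ (j * k) * (Pi.single (xv d (r ^ j)) (1 : ℂ) : NzRes d → ℂ) x

/-- `A₁ = ∑_{j=1}^{(d-1)/2} (ω^j |x_j⟩⟨x_{d-j}| + ω^{-j} |x_{d-j}⟩⟨x_j|)`. -/
noncomputable def A1 (d : ℕ) [Fact (1 < d)] : Matrix (NzRes d) (NzRes d) ℂ :=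
  ∑ j ∈ Finset.Icc 1 ((d - 1) / 2),
    (omC d ^ j • Matrix.single (xv d j) (xv d (d - j)) (1 : ℂ) +
      (omC d)⁻¹ ^ j • Matrix.single (xv d (d - j)) (xv d j) (1 : ℂ))

/-- `A₂ = ∑_{j=1}^{d-1} |x_j⟩⟨x_{d-j}|`. -/
noncomputable def A2 (d : ℕ) [Fact (1 < d)] : Matrix (NzRes d) (NzRes d) ℂ :=
  ∑ j ∈ Finset.Icc 1 (d - 1), Matrix.single (xv d j) (xv d (d - j)) (1 : ℂ)

/-- `A₃ = |u₀⟩⟨u₀| + η^{(d-1)/2}|u_{(d-1)/2}⟩⟨u_{(d-1)/2}|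
    + ∑_{k=1}^{(d-3)/2} (η^k |u_k⟩⟨u_{d-1-k}| + η^{-k} |u_{d-1-k}⟩⟨u_k|)`. -/
noncomputable def A3 (d r : ℕ) [Fact (1 < d)] : Matrix (NzRes d) (NzRes d) ℂ :=
  Matrix.vecMulVec (uvec d r 0) (star (uvec d r 0)) +
  etC d ^ ((d - 1) / 2) •
    Matrix.vecMulVec (uvec d r ((d - 1) / 2)) (star (uvec d r ((d - 1) / 2))) +
  ∑ k ∈ Finset.Icc 1 ((d - 3) / 2),
    (etC d ^ k • Matrix.vecMulVec (uvec d r k) (star (uvec d r (d - 1 - k))) +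
      (etC d)⁻¹ ^ k • Matrix.vecMulVec (uvec d r (d - 1 - k)) (star (uvec d r k)))

/-- `A₄ = |u₀⟩⟨u₀| + |u_{(d-1)/2}⟩⟨u_{(d-1)/2}|
    + ∑_{k=1}^{(d-3)/2} (|u_{d-1-k}⟩⟨u_k| + |u_k⟩⟨u_{d-1-k}|)`. -/
noncomputable def A4 (d r : ℕ) [Fact (1 < d)] : Matrix (NzRes d) (NzRes d) ℂ :=
  Matrix.vecMulVec (uvec d r 0) (star (uvec d r 0)) +
  Matrix.vecMulVec (uvec d r ((d - 1) / 2)) (star (uvec d r ((d - 1) / 2))) +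
  ∑ k ∈ Finset.Icc 1 ((d - 3) / 2),
    (Matrix.vecMulVec (uvec d r (d - 1 - k)) (star (uvec d r k)) +
      Matrix.vecMulVec (uvec d r k) (star (uvec d r (d - 1 - k))))

/-- The diagonal matrix `O x_k = ω^k x_k`. -/
noncomputable def Omat (d : ℕ) : Matrix (NzRes d) (NzRes d) ℂ :=
  Matrix.diagonal fun k : NzRes d => omC d ^ (k.1).val

/-- The permutation matrix `U x_k = x_{k·r⁻¹ mod d}`. -/
noncomputable def Umat (d r : ℕ) : Matrix (NzRes d) (NzRes d) ℂ :=
  Matrix.of fun i k : NzRes d =>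
    if (i : ZMod d) = (k : ZMod d) * (r : ZMod d)⁻¹ then (1 : ℂ) else 0

/-- `ψ̃ = (1/√(d-1)) ∑_{j=1}^{d-1} x_j ⊗ x_{d-j}`, as a vector on the product index type. -/
noncomputable def psiT (d : ℕ) [Fact (1 < d)] : NzRes d × NzRes d → ℂ :=
  fun p => (Real.sqrt ((d : ℝ) - 1) : ℂ)⁻¹ *
    ∑ j ∈ Finset.Icc 1 (d - 1),
      (Pi.single (xv d j) (1 : ℂ) : NzRes d → ℂ) p.1 *
        (Pi.single (xv d (d - j)) (1 : ℂ) : NzRes d → ℂ) p.2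


theorem aux_gen {d : ℕ} [Fact d.Prime] (A : Matrix (NzRes d) (NzRes d) ℂ)
    (g : ZMod d → ZMod d) (f : ZMod d → ℂ)
    (hA : ∀ a k : NzRes d, A a k = if (k : ZMod d) = g a then f a else 0)
    (hg0 : ∀ a, a ≠ 0 → g a ≠ 0)
    (hg : ∀ a b, a ≠ 0 → b ≠ 0 → (g b = - g a ↔ b = - a))
    (hf : ∀ a, a ≠ 0 → f a * f (-a) = 1)
    (v : NzRes d × NzRes d → ℂ) (c : ℂ)
    (hv : ∀ p : NzRes d × NzRes d, v p = if (p.2 : ZMod d) = - p.1 then c else 0) :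
    (A ⊗ₖ A).mulVec v = v := by
  ext ⟨⟨a, ha⟩, ⟨b, hb⟩⟩
  simp only [Matrix.mulVec, dotProduct, Matrix.kroneckerMap_apply]
  rw [Finset.sum_eq_single (⟨g a, hg0 a ha⟩, ⟨g b, hg0 b hb⟩)]
  · rw [hA, hA, hv, hv]
    simp only [if_true, hg a b ha hb]
    split_ifs with h
    · subst h
      rw [hf a ha, one_mul]
    · simp
  · rintro ⟨⟨x, hx⟩, ⟨y, hy⟩⟩ - hne
    rw [hA, hA]
    simp only [ne_eq, Prod.mk.injEq, Subtype.mk.injEq, not_and] at hne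
    by_cases h : x = g a
    · simp [hne h]
    · simp [h]
  · simp

theorem xv_eq {d : ℕ} [Fact d.Prime] (j : ℕ) (hj : (j : ZMod d) ≠ 0) (x : NzRes d) :
    xv d j = x ↔ (j : ZMod d) = x := by
  rw [xv, dif_pos hj, Subtype.ext_iff]

theorem cast_ne {d j : ℕ} (h1 : 1 ≤ j) (h2 : j ≤ d - 1) : (j : ZMod d) ≠ 0 := by
  intro h
  rw [ZMod.natCast_eq_zero_iff] at h
  have := Nat.le_of_dvd (by omega) h
  omega

theorem sum_val {d : ℕ} [Fact d.Prime] (a : NzRes d) (G : ℕ → ℂ) :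
    ∑ j ∈ Finset.Icc 1 (d - 1), (if (j : ZMod d) = a then G j else 0) = G (a : ZMod d).val := by
  have h0 : (a : ZMod d).val ≠ 0 := by
    rw [ne_eq, ZMod.val_eq_zero]; exact a.2
  have h1 := ZMod.val_lt (a : ZMod d)
  rw [Finset.sum_eq_single (a : ZMod d).val]
  · simp
  · intro j hj hne
    rw [Finset.mem_Icc] at hj
    rw [if_neg]
    intro h
    apply hne
    rw [← h, ZMod.val_natCast_of_lt (by omega)]
  · intro h
    exact absurd (Finset.mem_Icc.2 ⟨by omega, by omega⟩) h

theorem cast_sub' {d j : ℕ} (h2 : j ≤ d - 1) : ((d - j : ℕ) : ZMod d) = - (j : ZMod d) := by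
  rw [Nat.cast_sub (by omega)]; simp

theorem psi_apply {d : ℕ} [Fact d.Prime] (p : NzRes d × NzRes d) :
    psiT d p = if (p.2 : ZMod d) = - p.1 then (Real.sqrt ((d : ℝ) - 1) : ℂ)⁻¹ else 0 := by
  have : ∀ j ∈ Finset.Icc 1 (d - 1), (Pi.single (xv d j) (1 : ℂ) : NzRes d → ℂ) p.1 *
        (Pi.single (xv d (d - j)) (1 : ℂ) : NzRes d → ℂ) p.2 =
      if (j : ZMod d) = p.1 then (if (p.2 : ZMod d) = - p.1 then 1 else 0) else 0 := by
    intro j hj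
    rw [Finset.mem_Icc] at hj
    have e1 := xv_eq j (cast_ne hj.1 hj.2) p.1
    have e2 := xv_eq (d - j) (cast_ne (d := d) (by omega) (by omega)) p.2
    rw [cast_sub' hj.2] at e2
    simp only [Pi.single_apply, eq_comm (a := p.1), eq_comm (a := p.2), e1, e2]
    by_cases h : (j : ZMod d) = p.1
    · simp [h, eq_comm]
    · simp [h]
  rw [psiT, Finset.sum_congr rfl this, sum_val p.1 (fun _ => _)]
  simp

theorem Hent {d : ℕ} [Fact d.Prime] (w : ℕ → ℂ) (a b : NzRes d) :
    (∑ j ∈ Finset.Icc 1 (d - 1), w j • Matrix.single (xv d j) (xv d (d - j)) (1 : ℂ)) a b =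
      if (b : ZMod d) = - a then w (a : ZMod d).val else 0 := by
  have : ∀ j ∈ Finset.Icc 1 (d - 1),
      (w j • Matrix.single (xv d j) (xv d (d - j)) (1 : ℂ)) a b =
      if (j : ZMod d) = a then (if (b : ZMod d) = - a then w j else 0) else 0 := by
    intro j hj
    rw [Finset.mem_Icc] at hj
    have e1 := xv_eq j (cast_ne hj.1 hj.2) a
    have e2 := xv_eq (d - j) (cast_ne (d := d) (by omega) (by omega)) b
    rw [cast_sub' hj.2] at e2
    rw [Matrix.smul_apply, Matrix.single_apply]
    simp only [e1, e2]
    by_cases h : (j : ZMod d) = a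
    · simp [h, eq_comm]
    · simp [h]
  rw [Matrix.sum_apply, Finset.sum_congr rfl this,
    sum_val a (fun j => if (b : ZMod d) = - a then w j else 0)]

theorem icc_range {M : Type*} [AddCommMonoid M] (F : ℕ → M) (m : ℕ) :
    ∑ k ∈ Finset.Icc 1 m, F k = ∑ k ∈ Finset.range m, F (k + 1) := by
  induction m with
  | zero => simp
  | succ m ih => rw [Finset.sum_Icc_succ_top (by omega), ih, Finset.sum_range_succ]

theorem fold_icc {M : Type*} [AddCommMonoid M] (F : ℕ → M) (m : ℕ) :
    ∑ k ∈ Finset.Icc 1 m, (F k + F (2 * m + 1 - k)) = ∑ k ∈ Finset.Icc 1 (2 * m), F k := by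
  rw [icc_range, icc_range, two_mul, Finset.sum_range_add, Finset.sum_add_distrib]
  congr 1
  rw [← Finset.sum_range_reflect]
  apply Finset.sum_congr rfl
  intro k hk
  rw [Finset.mem_range] at hk
  congr 1
  omega

theorem fold_range {M : Type*} [AddCommMonoid M] (F : ℕ → M) (m : ℕ) :
    F 0 + F (m + 1) + ∑ k ∈ Finset.Icc 1 m, (F k + F (2 * m + 2 - k)) =
      ∑ k ∈ Finset.range (2 * m + 2), F k := by
  have e : 2 * m + 2 = (m + 1) + (m + 1) := by ring
  rw [icc_range, e, Finset.sum_range_add, Finset.sum_add_distrib, Finset.sum_range_succ' F,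
    Finset.sum_range_succ' (fun x => F (m + 1 + x)),
    ← Finset.sum_range_reflect (fun x => F (m + 1 + (x + 1)))]
  have : ∑ k ∈ Finset.range m, F (m + 1 + (m + 1) - (k + 1)) =
      ∑ k ∈ Finset.range m, F (m + 1 + (m - 1 - k + 1)) := by
    apply Finset.sum_congr rfl
    intro k hk
    rw [Finset.mem_range] at hk
    congr 1
    omega
  rw [this, add_zero]
  abel

theorem om_pow {d : ℕ} [Fact d.Prime] : omC d ^ d = 1 :=
  (Complex.isPrimitiveRoot_exp d (Fact.out : d.Prime).ne_zero).pow_eq_one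

theorem et_prim {d : ℕ} [Fact d.Prime] : IsPrimitiveRoot (etC d) (d - 1) := by
  have h := (Fact.out : d.Prime).one_lt
  have := Complex.isPrimitiveRoot_exp (d - 1) (by omega)
  rw [Nat.cast_sub h.le] at this
  simpa [etC] using this

theorem inv_pow_aux {z : ℂ} {n k : ℕ} (h : z ^ n = 1) (hk : k ≤ n) : z⁻¹ ^ k = z ^ (n - k) := by
  have hz : z ^ k * z ^ (n - k) = 1 := by rw [← pow_add, Nat.add_sub_cancel' hk, h]
  rw [inv_pow]
  exact inv_eq_of_mul_eq_one_right hz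

theorem A1_ent {d : ℕ} [Fact d.Prime] (hodd : Odd d) (a b : NzRes d) :
    A1 d a b = if (b : ZMod d) = - a then omC d ^ (a : ZMod d).val else 0 := by
  rw [← Hent (fun j => omC d ^ j)]
  refine congrFun (congrFun ?_ _) _
  obtain ⟨m, hm⟩ := hodd
  have e1 : (d - 1) / 2 = m := by omega
  have e2 : d - 1 = 2 * m := by omega
  rw [A1, e1, e2, ← fold_icc]
  apply Finset.sum_congr rfl
  intro k hk
  rw [Finset.mem_Icc] at hk
  rw [inv_pow_aux om_pow (by omega), ← hm]
  congr 4
  omega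

theorem A2_ent {d : ℕ} [Fact d.Prime] (a b : NzRes d) :
    A2 d a b = if (b : ZMod d) = - a then 1 else 0 := by
  rw [← Hent (fun j => 1)]
  simp [A2]

theorem r_surj {d r : ℕ} [Fact d.Prime] (hr : orderOf (r : ZMod d) = d - 1) (x : NzRes d) :
    ∃ i < d - 1, (r : ZMod d) ^ i = x := by
  have h := (Fact.out : d.Prime).one_lt
  have : NeZero (d - 1) := ⟨by omega⟩
  have hp : IsPrimitiveRoot (r : ZMod d) (d - 1) := hr ▸ IsPrimitiveRoot.orderOf _
  exact hp.eq_pow_of_pow_eq_one (ZMod.pow_card_sub_one_eq_one x.2)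

theorem r_ne {d r : ℕ} [Fact d.Prime] (hr : orderOf (r : ZMod d) = d - 1) : (r : ZMod d) ≠ 0 := by
  have h := (Fact.out : d.Prime).one_lt
  intro h0
  have := pow_orderOf_eq_one (r : ZMod d)
  rw [hr, h0, zero_pow (by omega)] at this
  exact zero_ne_one this

theorem u_ent {d r : ℕ} [Fact d.Prime] (hr : orderOf (r : ZMod d) = d - 1) (x : NzRes d)
    (i : ℕ) (hi : i < d - 1) (hx : (r : ZMod d) ^ i = x) (k : ℕ) :
    uvec d r k x = (Real.sqrt ((d : ℝ) - 1) : ℂ)⁻¹ * etC d ^ (i * k) := by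
  rw [uvec]
  have key : ∀ j, (x = xv d (r ^ j)) ↔ (r : ZMod d) ^ j = (r : ZMod d) ^ i := by
    intro j
    rw [eq_comm, xv_eq _ (by rw [Nat.cast_pow]; exact pow_ne_zero _ (r_ne hr)), Nat.cast_pow, hx]
  congr 1
  rw [Finset.sum_eq_single i]
  · simp [Pi.single_apply, key]
  · intro j hj hne
    rw [Pi.single_apply, if_neg, mul_zero]
    rw [key]
    intro h
    apply hne
    rw [Finset.mem_range] at hj
    exact pow_injOn_Iio_orderOf (by simpa [hr] using hj) (by simpa [hr] using hi) h
  · intro h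
    exact absurd (Finset.mem_range.2 hi) h

theorem u_star {d r : ℕ} [Fact d.Prime] (hr : orderOf (r : ZMod d) = d - 1)
    (k l : ℕ) (hk : k + l = d - 1 ∨ k + l = 0) : star (uvec d r k) = uvec d r l := by
  have hn : etC d ≠ 0 := Complex.exp_ne_zero _
  have hk' : etC d ^ (k + l) = 1 := by
    rcases hk with h | h
    · rw [h, et_prim.pow_eq_one]
    · rw [h, pow_zero]
  have hc : (starRingEnd ℂ) (etC d) = (etC d)⁻¹ := by
    have h := (Fact.out : d.Prime).one_lt
    rw [Complex.inv_eq_conj]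
    exact Complex.norm_eq_one_of_pow_eq_one et_prim.pow_eq_one (by omega)
  ext x
  obtain ⟨i, hi, hx⟩ := r_surj hr x
  rw [Pi.star_apply, u_ent hr x i hi hx, u_ent hr x i hi hx]
  simp only [RCLike.star_def, map_mul, map_inv₀, Complex.conj_ofReal, map_pow, hc]
  congr 1
  rw [inv_pow]
  apply inv_eq_of_mul_eq_one_right
  rw [← pow_add, ← mul_add, mul_comm, pow_mul, hk', one_pow]

theorem F_ent {d r : ℕ} [Fact d.Prime] (hr : orderOf (r : ZMod d) = d - 1) (s : ℕ)
    (x y : NzRes d) :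
    (∑ k ∈ Finset.range (d - 1),
      etC d ^ (s * k) • Matrix.vecMulVec (uvec d r k) (uvec d r k)) x y =
      if (y : ZMod d) = (x : ZMod d)⁻¹ * ((r : ZMod d) ^ s)⁻¹ then 1 else 0 := by
  have hd := (Fact.out : d.Prime).one_lt
  obtain ⟨i, hi, hx⟩ := r_surj hr x
  obtain ⟨j, hj, hy⟩ := r_surj hr y
  have h1 : ((y : ZMod d) = (x : ZMod d)⁻¹ * ((r : ZMod d) ^ s)⁻¹) ↔
      (d - 1) ∣ (i + j + s) := by
    rw [← hr, orderOf_dvd_iff_pow_eq_one, pow_add, pow_add, hx, hy, ← mul_inv,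
      ← mul_eq_one_iff_eq_inv₀ (mul_ne_zero x.2 (pow_ne_zero _ (r_ne hr)))]
    rw [show (y : ZMod d) * (x * (r : ZMod d) ^ s) = x * y * (r : ZMod d) ^ s by ring]
  have hsq : ((Real.sqrt ((d : ℝ) - 1) : ℂ)⁻¹) * ((Real.sqrt ((d : ℝ) - 1) : ℂ)⁻¹) =
      ((d - 1 : ℕ) : ℂ)⁻¹ := by
    have h2 : (0 : ℝ) ≤ (d : ℝ) - 1 := by
      have : (1 : ℝ) < d := by exact_mod_cast hd
      linarith
    rw [← mul_inv, ← Complex.ofReal_mul, Real.mul_self_sqrt h2, Nat.cast_sub hd.le]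
    simp
  have hne : ((d - 1 : ℕ) : ℂ) ≠ 0 := by
    rw [Nat.cast_ne_zero]; omega
  have h3 : ∀ k ∈ Finset.range (d - 1),
      (etC d ^ (s * k) • Matrix.vecMulVec (uvec d r k) (uvec d r k)) x y =
      ((d - 1 : ℕ) : ℂ)⁻¹ * (etC d ^ (i + j + s)) ^ k := by
    intro k _
    rw [Matrix.smul_apply, Matrix.vecMulVec_apply, u_ent hr x i hi hx, u_ent hr y j hj hy, ← hsq,
      smul_eq_mul]
    ring
  rw [Matrix.sum_apply, Finset.sum_congr rfl h3, ← Finset.mul_sum]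
  simp only [h1, ← et_prim.pow_eq_one_iff_dvd]
  split_ifs with h
  · rw [h]
    simp [hne]
  · rw [geom_sum_eq h, ← pow_mul, mul_comm (i + j + s), pow_mul, et_prim.pow_eq_one]
    simp

theorem A3_ent {d r : ℕ} [Fact d.Prime] (hodd : Odd d) (hr : orderOf (r : ZMod d) = d - 1)
    (x y : NzRes d) :
    A3 d r x y = if (y : ZMod d) = (x : ZMod d)⁻¹ * ((r : ZMod d) ^ 1)⁻¹ then 1 else 0 := by
  have hd := (Fact.out : d.Prime).one_lt
  rw [← F_ent hr]
  refine congrFun (congrFun ?_ _) _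
  obtain ⟨m, hm⟩ := hodd
  obtain ⟨m, rfl⟩ : ∃ n, m = n + 1 := ⟨m - 1, by omega⟩
  have e0 : d - 1 = 2 * m + 2 := by omega
  have e1 : (d - 1) / 2 = m + 1 := by omega
  have e2 : (d - 3) / 2 = m := by omega
  rw [A3, e1, e2, e0, ← fold_range, u_star hr 0 0 (by omega),
    u_star hr (m + 1) (m + 1) (by omega)]
  congr 1
  · simp
  · apply Finset.sum_congr rfl
    intro k hk
    rw [Finset.mem_Icc] at hk
    rw [u_star hr (2 * m + 2 - k) k (by omega), u_star hr k (2 * m + 2 - k) (by omega),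
      inv_pow_aux (k := k) et_prim.pow_eq_one (by omega), one_mul, one_mul, e0]

theorem A4_ent {d r : ℕ} [Fact d.Prime] (hodd : Odd d) (hr : orderOf (r : ZMod d) = d - 1)
    (x y : NzRes d) :
    A4 d r x y = if (y : ZMod d) = (x : ZMod d)⁻¹ * ((r : ZMod d) ^ 0)⁻¹ then 1 else 0 := by
  have hd := (Fact.out : d.Prime).one_lt
  rw [← F_ent hr]
  refine congrFun (congrFun ?_ _) _
  obtain ⟨m, hm⟩ := hodd
  obtain ⟨m, rfl⟩ : ∃ n, m = n + 1 := ⟨m - 1, by omega⟩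
  have e0 : d - 1 = 2 * m + 2 := by omega
  have e1 : (d - 1) / 2 = m + 1 := by omega
  have e2 : (d - 3) / 2 = m := by omega
  rw [A4, e1, e2, e0, ← fold_range, u_star hr 0 0 (by omega),
    u_star hr (m + 1) (m + 1) (by omega)]
  congr 1
  · simp
  · apply Finset.sum_congr rfl
    intro k hk
    rw [Finset.mem_Icc] at hk
    rw [u_star hr (2 * m + 2 - k) k (by omega), u_star hr k (2 * m + 2 - k) (by omega)]
    simp [add_comm]

theorem om_neg {d : ℕ} [Fact d.Prime] (a : ZMod d) (ha : a ≠ 0) :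
    omC d ^ a.val * omC d ^ (-a).val = 1 := by
  have : NeZero a := ⟨ha⟩
  rw [← pow_add, ZMod.val_neg_of_ne_zero, Nat.add_sub_cancel' (ZMod.val_lt a).le, om_pow]

/-- The maximally entangled state `ψ̃` is invariant under `A_i ⊗ A_i`
for `i = 1,2,3,4`, and consequently under `O ⊗ O` and `U ⊗ U`. -/
theorem stmt_11 (d r : ℕ) [Fact d.Prime] (hodd : Odd d)
    (hr : orderOf (r : ZMod d) = d - 1) :
    (A1 d ⊗ₖ A1 d).mulVec (psiT d) = psiT d ∧
    (A2 d ⊗ₖ A2 d).mulVec (psiT d) = psiT d ∧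
    (A3 d r ⊗ₖ A3 d r).mulVec (psiT d) = psiT d ∧
    (A4 d r ⊗ₖ A4 d r).mulVec (psiT d) = psiT d ∧
    (Omat d ⊗ₖ Omat d).mulVec (psiT d) = psiT d ∧
    (Umat d r ⊗ₖ Umat d r).mulVec (psiT d) = psiT d := by
  have hr0 := r_ne hr
  have hinv : ∀ s : ℕ, ∀ a b : ZMod d, a ≠ 0 → b ≠ 0 →
      (b⁻¹ * ((r : ZMod d) ^ s)⁻¹ = -(a⁻¹ * ((r : ZMod d) ^ s)⁻¹) ↔ b = -a) := by
    intro s a b _ _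
    rw [← neg_mul, mul_left_inj' (inv_ne_zero (pow_ne_zero _ hr0)), ← inv_neg, _root_.inv_inj]
  refine ⟨?_, ?_, ?_, ?_, ?_, ?_⟩
  · exact aux_gen _ (fun a => -a) (fun a => omC d ^ a.val) (A1_ent hodd) (fun a ha => by simpa using ha)
      (fun a b _ _ => neg_inj) om_neg _ _ psi_apply
  · exact aux_gen _ (fun a => -a) (fun a => 1) A2_ent (fun a ha => by simpa using ha)
      (fun a b _ _ => neg_inj) (by simp) _ _ psi_apply
  · exact aux_gen _ (fun a => a⁻¹ * ((r : ZMod d) ^ 1)⁻¹) (fun a => 1) (A3_ent hodd hr)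
      (fun a ha => mul_ne_zero (inv_ne_zero ha) (inv_ne_zero (pow_ne_zero _ hr0)))
      (hinv 1) (by simp) _ _ psi_apply
  · exact aux_gen _ (fun a => a⁻¹ * ((r : ZMod d) ^ 0)⁻¹) (fun a => 1) (A4_ent hodd hr)
      (fun a ha => mul_ne_zero (inv_ne_zero ha) (inv_ne_zero (pow_ne_zero _ hr0)))
      (hinv 0) (by simp) _ _ psi_apply
  · refine aux_gen _ (fun a => a) (fun a => omC d ^ a.val) ?_ (fun a ha => ha)
      (fun a b _ _ => Iff.rfl) om_neg _ _ psi_apply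
    intro a k
    simp only [Omat, Matrix.diagonal_apply, Subtype.ext_iff, eq_comm]
  · refine aux_gen _ (fun a => a * (r : ZMod d)) (fun a => 1) ?_ (fun a ha => mul_ne_zero ha hr0)
      (fun a b _ _ => by rw [← neg_mul, mul_left_inj' hr0]) (by simp) _ _ psi_apply
    intro a k
    simp only [Umat, Matrix.of_apply, eq_mul_inv_iff_mul_eq₀ hr0, eq_comm]
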